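/- arXiv:2503.04547 — 2 statements merged into one kernel-verified Lean document; each statement's English description precedes it below -/
import Mathlib

section
/- Let m := p−b−1 ≥ 1 and suppose 2 ≤ ℓ ≤ b+m. Then the trace of the linear endomorphism f ↦ ρ(g·f) of W equals (1/π_ℓ)·{ Σ_{k=0}^{min(m,ℓ)} ((b+1)_{m−k}/(m−k)!) · e_{ℓ−k}(n_1−1,…,n_ℓ−1) + (−1)^{ℓ+1} · (b−ℓ+1)_m / m! }, where (b−ℓ+1)_m = ∏_{i=0}^{m−1}(b−ℓ+1+i). -/
open Finset MvPolynomial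

noncomputable section

/-- Value of the elementary symmetric polynomial `e_k` at the family `v` restricted to `A`. -/
def esymVal {α F : Type*} [DecidableEq α] [CommRing F] (A : Finset α) (k : ℕ) (v : α → F) : F :=
  ∑ B ∈ A.powersetCard k, ∏ i ∈ B, v i

/-- Pochhammer symbol `(a)_k = a (a+1) ⋯ (a+k-1)`. -/
def poch (a : ℚ) (k : ℕ) : ℚ := ∏ i ∈ Finset.range k, (a + (i : ℚ))

variable {p : ℕ}

/-- The index in `Fin (∑ t, n t)` of the `i`-th element of the `j`-th consecutive block. -/
def emb (n : Fin p → ℕ) (j : Fin p) (i : Fin (n j)) : Fin (∑ t, n t) :=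
  ⟨(∑ t ∈ Finset.univ.filter (fun t => t < j), n t) + i, by
    have hj : j ∉ Finset.univ.filter (fun t => t < j) := by simp
    have h2 : ∑ t ∈ insert j (Finset.univ.filter (fun t => t < j)), n t ≤ ∑ t, n t :=
      Finset.sum_le_sum_of_subset (Finset.subset_univ _)
    rw [Finset.sum_insert hj] at h2
    have := i.isLt
    omega⟩

/-- The Young subgroup: permutations mapping each block onto itself. -/
def youngGroup (n : Fin p → ℕ) : Finset (Equiv.Perm (Fin (∑ t, n t))) :=
  Finset.univ.filter fun w => ∀ (j : Fin p) (i : Fin (n j)), ∃ i' : Fin (n j),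
    w (emb n j i) = emb n j i'

/-- The action of a permutation of the variables on polynomials, as a linear map. -/
def permAct {σ : Type*} (w : Equiv.Perm σ) :
    MvPolynomial σ ℚ →ₗ[ℚ] MvPolynomial σ ℚ :=
  (MvPolynomial.rename ⇑w).toLinearMap

/-- Averaging operator over the Young subgroup. -/
def rho (n : Fin p → ℕ) :
    MvPolynomial (Fin (∑ t, n t)) ℚ →ₗ[ℚ] MvPolynomial (Fin (∑ t, n t)) ℚ :=
  ((youngGroup n).card : ℚ)⁻¹ • ∑ h ∈ youngGroup n, permAct h

/-- The alternating (Vandermonde) polynomial in the variables `x_{t 0}, …, x_{t b}`. -/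
def Delta {N b : ℕ} (t : Fin (b + 1) → Fin N) : MvPolynomial (Fin N) ℚ :=
  ∏ q ∈ Finset.univ.filter (fun q : Fin (b + 1) × Fin (b + 1) => q.1 < q.2),
    (X (t q.1) - X (t q.2))

/-- The span of all `Δ(x_{i₁},…,x_{i_{b+1}})` with `i₁ < ⋯ < i_{b+1}`. -/
def hookSpan (N b : ℕ) : Submodule ℚ (MvPolynomial (Fin N) ℚ) :=
  Submodule.span ℚ {f | ∃ t : Fin (b + 1) → Fin N, StrictMono t ∧ f = Delta t}

/-- The first `ℓ` block labels. -/
def firstL (p ℓ : ℕ) : Finset (Fin p) := Finset.univ.filter fun i => (i : ℕ) < ℓ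



/-! ### Abstract setting: a finite set `α` divided into blocks by `blk` -/

/-- permutations preserving blocks -/
def blkGroup {α β : Type*} [Fintype α] [DecidableEq α] [DecidableEq β] (blk : α → β) :
    Finset (Equiv.Perm α) :=
  Finset.univ.filter fun w => ∀ a, blk (w a) = blk a

/-- averaging operator for the block-preserving group -/
def blkRho {α β : Type*} [Fintype α] [DecidableEq α] [DecidableEq β] (blk : α → β) :
    MvPolynomial α ℚ →ₗ[ℚ] MvPolynomial α ℚ :=
  ((blkGroup blk).card : ℚ)⁻¹ • ∑ h ∈ blkGroup blk, permAct h

/-- Vandermonde determinant polynomial -/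
def vdm {α : Type*} {k : ℕ} (t : Fin k → α) : MvPolynomial α ℚ :=
  (Matrix.vandermonde (fun i => (X (t i) : MvPolynomial α ℚ))).det

section Abstract

set_option linter.unusedSectionVars false

variable {α β : Type*} [Fintype α] [DecidableEq α] [DecidableEq β] (blk : α → β)

theorem mem_blkGroup (w : Equiv.Perm α) : w ∈ blkGroup blk ↔ ∀ a, blk (w a) = blk a := by
  simp [blkGroup]

theorem one_mem_blkGroup : (1 : Equiv.Perm α) ∈ blkGroup blk := by
  simp [mem_blkGroup]

theorem blkGroup_card_ne : ((blkGroup blk).card : ℚ) ≠ 0 := by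
  have : 0 < (blkGroup blk).card := Finset.card_pos.2 ⟨1, one_mem_blkGroup blk⟩
  positivity

theorem mul_mem_blkGroup_iff {k : Equiv.Perm α} (hk : k ∈ blkGroup blk) (h : Equiv.Perm α) :
    h * k ∈ blkGroup blk ↔ h ∈ blkGroup blk := by
  rw [mem_blkGroup] at *
  simp only [mem_blkGroup, Equiv.Perm.mul_apply]
  constructor
  · intro H a
    obtain ⟨a', rfl⟩ := k.surjective a
    rw [H, hk]
  · intro H a
    rw [H, hk]

theorem sum_blkGroup_mul {M : Type*} [AddCommMonoid M] {k : Equiv.Perm α}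
    (hk : k ∈ blkGroup blk) (F : Equiv.Perm α → M) :
    ∑ h ∈ blkGroup blk, F (h * k) = ∑ h ∈ blkGroup blk, F h := by
  refine Finset.sum_equiv (Equiv.mulRight k) ?_ ?_
  · intro h
    exact (mul_mem_blkGroup_iff blk hk h).symm
  · intro h _
    rfl

theorem permAct_vdm (w : Equiv.Perm α) {k : ℕ} (t : Fin k → α) :
    permAct w (vdm t) = vdm (w ∘ t) := by
  unfold permAct vdm
  rw [AlgHom.toLinearMap_apply, AlgHom.map_det]
  congr 1
  ext i j : 2
  simp [Matrix.vandermonde_apply]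

theorem blkRho_apply (f : MvPolynomial α ℚ) :
    blkRho blk f = ((blkGroup blk).card : ℚ)⁻¹ • ∑ h ∈ blkGroup blk, permAct h f := by
  simp [blkRho]

theorem blkRho_vdm_perm {k : Equiv.Perm α} (hk : k ∈ blkGroup blk) {m : ℕ} (t : Fin m → α) :
    blkRho blk (vdm (k ∘ t)) = blkRho blk (vdm t) := by
  rw [blkRho_apply, blkRho_apply,
    ← sum_blkGroup_mul blk hk (fun h => permAct h (vdm t))]
  simp only [permAct_vdm]
  rfl

theorem vdm_comp_perm {m : ℕ} (t : Fin m → α) (σ : Equiv.Perm (Fin m)) :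
    vdm (t ∘ σ) = ((Equiv.Perm.sign σ : ℤ) : MvPolynomial α ℚ) * vdm t := by
  unfold vdm
  rw [← Matrix.det_permute]
  rfl

theorem vdm_eq_zero {m : ℕ} (t : Fin m → α) (h : ¬ Function.Injective t) : vdm t = 0 := by
  unfold vdm
  rw [Matrix.det_vandermonde_eq_zero_iff]
  unfold Function.Injective at h
  push Not at h
  obtain ⟨i, j, hij, hne⟩ := h
  exact ⟨i, j, by rw [hij], hne⟩

theorem eval_vdm {m : ℕ} (v : α → ℚ) (t : Fin m → α) :
    MvPolynomial.eval v (vdm t) = (Matrix.vandermonde (v ∘ t)).det := by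
  unfold vdm
  rw [RingHom.map_det]
  congr 1
  ext i j
  simp [Matrix.vandermonde_apply]

theorem blkRho_vdm_eq_zero {m : ℕ} (t : Fin m → α) (h : ¬ Function.Injective (blk ∘ t)) :
    blkRho blk (vdm t) = 0 := by
  by_cases ht : Function.Injective t
  · unfold Function.Injective at h
    push Not at h
    obtain ⟨i, j, hij, hne⟩ := h
    have hk : Equiv.swap (t i) (t j) ∈ blkGroup blk := by
      rw [mem_blkGroup]
      intro a
      simp only [Function.comp] at hij
      rw [Equiv.swap_apply_def]
      split_ifs with h1 h2
      · rw [h1, hij]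
      · rw [h2, hij]
      · rfl
    have h1 := blkRho_vdm_perm blk hk t
    rw [ht.swap_comp, vdm_comp_perm, Equiv.Perm.sign_swap hne] at h1
    simp only [Units.val_neg, Units.val_one, Int.cast_neg, Int.cast_one, neg_mul, one_mul,
      map_neg] at h1
    exact self_eq_neg.1 h1.symm
  · rw [vdm_eq_zero t ht, map_zero]

theorem vdm_exchange {m : ℕ} (z : α) (t : Fin (m + 1) → α) :
    vdm t = ∑ i : Fin (m + 1), (-1 : MvPolynomial α ℚ) ^ (i : ℕ) *
      vdm (Fin.cons z (t ∘ i.succAbove) : Fin (m + 1) → α) := by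
  let s : Fin (m + 2) → α := Fin.cons z t
  let M : Matrix (Fin (m + 2)) (Fin (m + 2)) (MvPolynomial α ℚ) :=
    fun i j => (Fin.cons 1 (fun j : Fin (m + 1) => X (s i) ^ (j : ℕ)) :
      Fin (m + 2) → MvPolynomial α ℚ) j
  have h0 : M.det = 0 := by
    refine Matrix.det_zero_of_column_eq (i := 0) (j := 1) (by simp) ?_
    intro k
    have : (1 : Fin (m + 2)) = Fin.succ 0 := rfl
    simp only [M, this, Fin.cons_zero, Fin.cons_succ]
    simp
  have hsub : ∀ i : Fin (m + 2), (M.submatrix i.succAbove Fin.succ).det = vdm (s ∘ i.succAbove) := by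
    intro i
    unfold vdm
    congr 1
  rw [Matrix.det_succ_column_zero] at h0
  simp only [hsub, M, Fin.cons_zero, mul_one] at h0
  rw [Fin.sum_univ_succ] at h0
  have e0 : s ∘ (0 : Fin (m + 2)).succAbove = t := by
    ext k
    simp [s]
  have e1 : ∀ i : Fin (m + 1), s ∘ i.succ.succAbove = Fin.cons z (t ∘ i.succAbove) := by
    intro i
    ext k
    refine Fin.cases ?_ (fun k => ?_) k
    · simp [s]
    · simp [s]
  rw [e0] at h0
  simp only [e1, Fin.val_zero, pow_zero, one_mul, Fin.val_succ, pow_succ, mul_neg, mul_one,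
    neg_mul, Finset.sum_neg_distrib] at h0
  exact add_neg_eq_zero.1 h0

/-- swap `fst j` with `c j` in every block -/
def blkSwap (fst c : β → α) (h1 : ∀ j, blk (fst j) = j) (h2 : ∀ j, blk (c j) = j) :
    Equiv.Perm α :=
  Function.Involutive.toPerm (fun a => Equiv.swap (fst (blk a)) (c (blk a)) a) (by
    intro a
    have : blk (Equiv.swap (fst (blk a)) (c (blk a)) a) = blk a := by
      rw [Equiv.swap_apply_def]
      split_ifs with h3 h4
      · rw [h2]
      · rw [h1]
      · rfl
    simp only [this, Equiv.swap_apply_self])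

variable (fst : β → α) (h1 : ∀ j, blk (fst j) = j)

theorem blkSwap_apply (c : β → α) (h2 : ∀ j, blk (c j) = j) (a : α) :
    blkSwap blk fst c h1 h2 a = Equiv.swap (fst (blk a)) (c (blk a)) a := rfl

theorem blkSwap_fst (c : β → α) (h2 : ∀ j, blk (c j) = j) (j : β) :
    blkSwap blk fst c h1 h2 (fst j) = c j := by
  rw [blkSwap_apply, h1, Equiv.swap_apply_left]

theorem blkSwap_c (c : β → α) (h2 : ∀ j, blk (c j) = j) (j : β) :
    blkSwap blk fst c h1 h2 (c j) = fst j := by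
  rw [blkSwap_apply, h2, Equiv.swap_apply_right]

theorem blkSwap_mem (c : β → α) (h2 : ∀ j, blk (c j) = j) :
    blkSwap blk fst c h1 h2 ∈ blkGroup blk := by
  rw [mem_blkGroup]
  intro a
  rw [blkSwap_apply, Equiv.swap_apply_def]
  split_ifs with h3 h4
  · rw [h2]
  · rw [h1]
  · rfl

/-- The blocks coordinates of `h ∘ fst` are independent uniform. -/
theorem sum_blkGroup_prod [Fintype β] (fst : β → α) (h1 : ∀ j, blk (fst j) = j) (F : β → α → ℚ) :
    ∑ h ∈ blkGroup blk, ∏ j, F j (h (fst j)) =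
      ((blkGroup blk).card : ℚ) *
        ∏ j, ((∑ a ∈ Finset.univ.filter (fun a => blk a = j), F j a) /
          ((Finset.univ.filter (fun a => blk a = j)).card : ℚ)) := by
  let P : Finset (β → α) := Fintype.piFinset (fun j => Finset.univ.filter (fun a => blk a = j))
  have hP : ∀ c, c ∈ P ↔ ∀ j, blk (c j) = j := by
    intro c
    simp [P, Fintype.mem_piFinset]
  have hcard : (P.card : ℚ) = ∏ j, ((Finset.univ.filter (fun a => blk a = j)).card : ℚ) := by
    simp [P, Fintype.card_piFinset]
  have hPne : (P.card : ℚ) ≠ 0 := by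
    have : 0 < P.card := Finset.card_pos.2 ⟨fst, (hP _).2 h1⟩
    positivity
  have key : ∀ c ∈ P, ∑ h ∈ blkGroup blk, ∏ j, F j (h (c j)) =
      ∑ h ∈ blkGroup blk, ∏ j, F j (h (fst j)) := by
    intro c hc
    have h2 := (hP c).1 hc
    rw [← sum_blkGroup_mul blk (blkSwap_mem blk fst h1 c h2)]
    simp only [Equiv.Perm.mul_apply, blkSwap_c]
  have key2 : ∀ h ∈ blkGroup blk, ∑ c ∈ P, ∏ j, F j (h (c j)) = ∑ c ∈ P, ∏ j, F j (c j) := by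
    intro h hh
    rw [mem_blkGroup] at hh
    refine Finset.sum_equiv (Equiv.arrowCongr (Equiv.refl β) h) ?_ ?_
    · intro c
      rw [hP, hP]
      simp [hh]
    · intro c _
      simp
  have h3 : (P.card : ℚ) * ∑ h ∈ blkGroup blk, ∏ j, F j (h (fst j)) =
      ((blkGroup blk).card : ℚ) * ∑ c ∈ P, ∏ j, F j (c j) := by
    rw [← nsmul_eq_mul, ← Finset.sum_const, ← nsmul_eq_mul (blkGroup blk).card,
      ← Finset.sum_const, ← Finset.sum_congr rfl key, Finset.sum_comm,
      Finset.sum_congr rfl key2]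
  rw [Finset.prod_div_distrib, ← hcard, Finset.prod_univ_sum]
  change _ = _ * ((∑ c ∈ P, ∏ j, F j (c j)) / _)
  field_simp
  linarith

end Abstract

/-- `z` followed by the increasing enumeration of `J` -/
def consEnum {p b : ℕ} (z : Fin p) (J : Finset (Fin p)) (hJ : J.card = b) : Fin (b + 1) → Fin p :=
  Fin.cons z (J.orderEmbOfFin hJ)

theorem consEnum_injective {p b : ℕ} (z : Fin p) (J : Finset (Fin p)) (hJ : J.card = b)
    (hz : z ∉ J) : Function.Injective (consEnum z J hJ) := by
  unfold consEnum
  rw [Fin.cons_injective_iff]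
  refine ⟨?_, (J.orderEmbOfFin hJ).injective⟩
  rw [Finset.range_orderEmbOfFin]
  simpa using hz

theorem range_consEnum {p b : ℕ} (z : Fin p) (J : Finset (Fin p)) (hJ : J.card = b) :
    Set.range (consEnum z J hJ) = insert z (J : Set (Fin p)) := by
  unfold consEnum
  rw [Fin.range_cons, Finset.range_orderEmbOfFin]

theorem exists_perm_of_range_eq {m : ℕ} {β : Type*} {u u' : Fin m → β}
    (hu : Function.Injective u) (hu' : Function.Injective u')
    (h : Set.range u = Set.range u') : ∃ σ : Equiv.Perm (Fin m), u = u' ∘ σ := by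
  refine ⟨((Equiv.ofInjective u hu).trans (Equiv.setCongr h)).trans
    (Equiv.ofInjective u' hu').symm, ?_⟩
  ext i
  simp only [Function.comp, Equiv.trans_apply]
  have := Equiv.apply_ofInjective_symm hu' (Equiv.setCongr h (Equiv.ofInjective u hu i))
  rw [this]
  rfl

/-- evaluation point attached to `J` on blocks -/
def ptJ {p : ℕ} (J : Finset (Fin p)) (j : Fin p) : ℚ := if j ∈ J then ((j : ℕ) : ℚ) + 1 else 0

theorem ptJ_injOn {p : ℕ} (J : Finset (Fin p)) (i j : Fin p) (hi : i ∈ J) (h : ptJ J i = ptJ J j) :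
    i = j := by
  unfold ptJ at h
  rw [if_pos hi] at h
  split_ifs at h with hj
  · apply Fin.ext
    have h2 : ((i : ℕ) : ℚ) = ((j : ℕ) : ℚ) := by linarith
    exact_mod_cast h2
  · exfalso
    have : (0 : ℚ) ≤ ((i : ℕ) : ℚ) := by positivity
    linarith

section Abstract2

set_option linter.unusedSectionVars false

variable {α : Type*} [Fintype α] [DecidableEq α] {p b : ℕ} (blk : α → Fin p)
  (fst : Fin p → α) (z : Fin p)

/-- index type of the basis of invariants -/
abbrev IdxJ (p b : ℕ) (z : Fin p) : Type :=
  {J : Finset (Fin p) // J ∈ (Finset.univ.erase z).powersetCard b}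

theorem IdxJ.card {p b : ℕ} {z : Fin p} (J : IdxJ p b z) : J.1.card = b :=
  (Finset.mem_powersetCard.1 J.2).2

theorem IdxJ.notMem {p b : ℕ} {z : Fin p} (J : IdxJ p b z) : z ∉ J.1 := fun h => by
  simpa using (Finset.mem_powersetCard.1 J.2).1 h

/-- tuple attached to `J` -/
def tupJ (J : IdxJ p b z) : Fin (b + 1) → α := fst ∘ consEnum z J.1 J.card

/-- basis of invariants -/
def basD (J : IdxJ p b z) : MvPolynomial α ℚ := blkRho blk (vdm (tupJ fst z J))

theorem blkRho_vdm_mem_span_aux (h1 : ∀ j, blk (fst j) = j) (t : Fin b → α) :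
    blkRho blk (vdm (Fin.cons (fst z) t : Fin (b + 1) → α)) ∈
      Submodule.span ℚ (Set.range (basD (b := b) blk fst z)) := by
  set s : Fin (b + 1) → α := Fin.cons (fst z) t with hs
  by_cases hinj : Function.Injective (blk ∘ s)
  · have hex : ∃ c : Fin p → α, (∀ j, blk (c j) = j) ∧ ∀ i, c (blk (s i)) = s i := by
      classical
      refine ⟨fun j => if h : ∃ i, blk (s i) = j then s h.choose else fst j, ?_, ?_⟩
      · intro j
        dsimp only
        split_ifs with h
        · exact h.choose_spec
        · exact h1 j
      · intro i
        have h : ∃ i', blk (s i') = blk (s i) := ⟨i, rfl⟩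
        dsimp only
        rw [dif_pos h]
        exact congrArg s (hinj h.choose_spec)
    obtain ⟨c, hc, hcs⟩ := hex
    rw [← blkRho_vdm_perm blk (blkSwap_mem blk fst h1 c hc)]
    have e1 : blkSwap blk fst c h1 hc ∘ s = fst ∘ (blk ∘ s) := by
      ext i
      simp only [Function.comp]
      conv_lhs => rw [← hcs i]
      rw [blkSwap_c]
    rw [e1]
    have e2 : blk ∘ s = Fin.cons z (blk ∘ t) := by
      ext i
      refine Fin.cases ?_ (fun k => ?_) i
      · simp [hs, h1]
      · simp [hs]
    rw [e2] at hinj ⊢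
    obtain ⟨hz, hbt⟩ := Fin.cons_injective_iff.1 hinj
    let J : IdxJ p b z := ⟨Finset.univ.image (blk ∘ t), by
      rw [Finset.mem_powersetCard]
      refine ⟨?_, ?_⟩
      · intro x hx
        rw [Finset.mem_erase]
        refine ⟨?_, Finset.mem_univ _⟩
        rintro rfl
        apply hz
        simpa using hx
      · rw [Finset.card_image_of_injective _ hbt]
        simp⟩
    have hr : Set.range (Fin.cons z (blk ∘ t) : Fin (b + 1) → Fin p) =
        Set.range (consEnum z J.1 J.card) := by
      rw [range_consEnum, Fin.range_cons]
      simp [J, Function.comp_def]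
    obtain ⟨σ, hσ⟩ := exists_perm_of_range_eq hinj (consEnum_injective z J.1 J.card J.notMem) hr
    rw [hσ, ← Function.comp_assoc, vdm_comp_perm, ← zsmul_eq_mul, map_zsmul]
    exact Submodule.smul_of_tower_mem _ _ (Submodule.subset_span ⟨J, rfl⟩)
  · rw [blkRho_vdm_eq_zero blk s hinj]
    exact Submodule.zero_mem _

theorem blkRho_vdm_mem_span (h1 : ∀ j, blk (fst j) = j) (t : Fin (b + 1) → α) :
    blkRho blk (vdm t) ∈ Submodule.span ℚ (Set.range (basD (b := b) blk fst z)) := by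
  rw [vdm_exchange (fst z) t, map_sum]
  refine Submodule.sum_mem _ fun i _ => ?_
  have : ((-1 : MvPolynomial α ℚ) ^ (i : ℕ)) = (((-1 : ℤ) ^ (i : ℕ) : ℤ) : MvPolynomial α ℚ) := by
    simp
  rw [this, ← zsmul_eq_mul, map_zsmul]
  exact Submodule.smul_of_tower_mem _ _ (blkRho_vdm_mem_span_aux blk fst z h1 _)

theorem eval_permAct (v : α → ℚ) (w : Equiv.Perm α) (f : MvPolynomial α ℚ) :
    MvPolynomial.eval v (permAct w f) = MvPolynomial.eval (v ∘ w) f := by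
  unfold permAct
  rw [AlgHom.toLinearMap_apply, MvPolynomial.eval_rename]

theorem eval_blkRho (v : α → ℚ) (f : MvPolynomial α ℚ) :
    MvPolynomial.eval v (blkRho blk f) = ((blkGroup blk).card : ℚ)⁻¹ *
      ∑ h ∈ blkGroup blk, MvPolynomial.eval (v ∘ h) f := by
  rw [blkRho_apply, MvPolynomial.smul_eval, map_sum]
  simp only [eval_permAct]

theorem eval_blkRho_ptJ (J : Finset (Fin p)) (f : MvPolynomial α ℚ) :
    MvPolynomial.eval (ptJ J ∘ blk) (blkRho blk f) = MvPolynomial.eval (ptJ J ∘ blk) f := by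
  rw [eval_blkRho]
  have : ∀ h ∈ blkGroup blk, MvPolynomial.eval ((ptJ J ∘ blk) ∘ h) f =
      MvPolynomial.eval (ptJ J ∘ blk) f := by
    intro h hh
    rw [mem_blkGroup] at hh
    congr 2
    ext a
    simp [hh]
  rw [Finset.sum_congr rfl this, Finset.sum_const, nsmul_eq_mul]
  have := blkGroup_card_ne blk
  field_simp

/-- the normalizing constant -/
def cJ (J : IdxJ p b z) : ℚ := (Matrix.vandermonde (ptJ J.1 ∘ consEnum z J.1 J.card)).det

theorem cJ_ne_zero (J : IdxJ p b z) : cJ z J ≠ 0 := by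
  unfold cJ
  rw [Matrix.det_vandermonde_ne_zero_iff]
  intro i j hij
  apply consEnum_injective z J.1 J.card J.notMem
  have hi : consEnum z J.1 J.card i ∈ insert z (J.1 : Set (Fin p)) := by
    rw [← range_consEnum z J.1 J.card]; exact ⟨i, rfl⟩
  have hj : consEnum z J.1 J.card j ∈ insert z (J.1 : Set (Fin p)) := by
    rw [← range_consEnum z J.1 J.card]; exact ⟨j, rfl⟩
  rcases hi with hi | hi
  · rcases hj with hj | hj
    · rw [hi, hj]
    · exact (ptJ_injOn J.1 _ _ hj hij.symm).symm
  · exact ptJ_injOn J.1 _ _ hi hij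

theorem eval_basD (h1 : ∀ j, blk (fst j) = j) (J J' : IdxJ p b z) :
    MvPolynomial.eval (ptJ J.1 ∘ blk) (basD blk fst z J') = if J' = J then cJ z J else 0 := by
  unfold basD
  rw [eval_blkRho_ptJ, eval_vdm]
  have e : (ptJ J.1 ∘ blk) ∘ tupJ fst z J' = ptJ J.1 ∘ consEnum z J'.1 J'.card := by
    ext i
    simp [tupJ, h1]
  rw [e]
  split_ifs with h
  · subst h
    rfl
  · rw [Matrix.det_vandermonde_eq_zero_iff]
    have : ∃ x ∈ J'.1, x ∉ J.1 := by
      by_contra hcon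
      push Not at hcon
      exact h (Subtype.ext (Finset.eq_of_subset_of_card_le hcon (by rw [J.card, J'.card])))
    obtain ⟨x, hx, hx'⟩ := this
    have hr := range_consEnum z J'.1 J'.card
    obtain ⟨i, hi⟩ : x ∈ Set.range (consEnum z J'.1 J'.card) := by
      rw [hr]; exact Or.inr hx
    obtain ⟨k, hk⟩ : z ∈ Set.range (consEnum z J'.1 J'.card) := by
      rw [hr]; exact Or.inl rfl
    refine ⟨i, k, ?_, ?_⟩
    · simp [hi, hk, ptJ, hx', J.notMem]
    · rintro rfl
      rw [hi] at hk
      subst hk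
      exact J'.notMem hx

theorem sign_induced {m : ℕ} {u : Fin m → Fin p} (hu : Function.Injective u)
    (γ : Equiv.Perm (Fin p)) (hγ : ∀ j, γ j ≠ j → j ∈ Set.range u) :
    ∃ σ : Equiv.Perm (Fin m), γ ∘ u = u ∘ σ ∧ Equiv.Perm.sign σ = Equiv.Perm.sign γ := by
  classical
  have hr : Set.range (γ ∘ u) = Set.range u := by
    have hsub : Set.range (γ ∘ u) ⊆ Set.range u := by
      rintro _ ⟨i, rfl⟩
      by_cases h : γ (u i) = u i
      · exact ⟨i, h.symm⟩
      · apply hγ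
        intro h2
        exact h (γ.injective h2)
    apply Set.eq_of_subset_of_ncard_le hsub
    rw [Set.ncard_range_of_injective hu, Set.ncard_range_of_injective (γ.injective.comp hu)]
  obtain ⟨σ, hσ⟩ := exists_perm_of_range_eq (γ.injective.comp hu) hu hr
  refine ⟨σ, hσ, ?_⟩
  have : γ = σ.extendDomain (Equiv.ofInjective u hu) := by
    ext j : 1
    by_cases hj : j ∈ Set.range u
    · obtain ⟨i, rfl⟩ := hj
      have := Equiv.Perm.extendDomain_apply_image σ (Equiv.ofInjective u hu) i
      simp only [Equiv.ofInjective_apply] at this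
      rw [this]
      exact congrFun hσ i
    · rw [Equiv.Perm.extendDomain_apply_not_subtype _ _ hj]
      by_contra h
      exact hj (hγ j h)
  rw [this, Equiv.Perm.sign_extendDomain]

theorem pointwise_det (h1 : ∀ j, blk (fst j) = j) (γ : Equiv.Perm (Fin p)) (hγ : γ.IsCycle) (hz : γ z = z)
    (g : Equiv.Perm α) (hg1 : ∀ j, g (fst j) = fst (γ j)) (hg2 : ∀ a, a ≠ fst (blk a) → g a = a)
    (h : Equiv.Perm α) (hh : h ∈ blkGroup blk) (J : IdxJ p b z) :
    (Matrix.vandermonde ((ptJ J.1 ∘ blk) ∘ g ∘ h ∘ tupJ fst z J)).det =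
      cJ z J * ((if ∀ j ∈ J.1 ∩ γ.support, h (fst j) ≠ fst j then 1 else 0) +
        ((Equiv.Perm.sign γ : ℤ) : ℚ) *
          (if γ.support ⊆ J.1 then (if ∀ j ∈ γ.support, h (fst j) = fst j then 1 else 0) else 0)) := by
  rw [mem_blkGroup] at hh
  have hb : ∀ j, blk (h (fst j)) = j := fun j => by rw [hh, h1]
  have hv1 : ∀ j, h (fst j) ≠ fst j → g (h (fst j)) = h (fst j) := by
    intro j hj
    apply hg2
    rwa [hb]
  have hv2 : ∀ j, h (fst j) = fst j → blk (g (h (fst j))) = γ j := by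
    intro j hj
    rw [hj, hg1, h1]
  have hv3 : ∀ j, γ j = j → blk (g (h (fst j))) = j := by
    intro j hj
    by_cases hx : h (fst j) = fst j
    · rw [hv2 j hx, hj]
    · rw [hv1 j hx, hb]
  have hv4 : ∀ j, h (fst j) ≠ fst j → blk (g (h (fst j))) = j := by
    intro j hj
    rw [hv1 j hj, hb]
  set u := consEnum z J.1 J.card with hu
  have huinj : Function.Injective u := consEnum_injective z J.1 J.card J.notMem
  have hur : Set.range u = insert z (J.1 : Set (Fin p)) := range_consEnum z J.1 J.card
  have hmem : ∀ i, u i = z ∨ u i ∈ J.1 := by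
    intro i
    have : u i ∈ insert z (J.1 : Set (Fin p)) := by rw [← hur]; exact ⟨i, rfl⟩
    exact this
  have hsupp : ∃ x, γ x ≠ x := by
    obtain ⟨x, hx, _⟩ := hγ
    exact ⟨x, hx⟩
  by_cases hA : ∀ j ∈ J.1 ∩ γ.support, h (fst j) ≠ fst j
  · rw [if_pos hA]
    have hB : (if γ.support ⊆ J.1 then (if ∀ j ∈ γ.support, h (fst j) = fst j then (1 : ℚ) else 0)
        else 0) = 0 := by
      split_ifs with h2 h3
      · obtain ⟨x, hx⟩ := hsupp
        have hx' : x ∈ γ.support := Equiv.Perm.mem_support.2 hx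
        exact absurd (h3 x hx') (hA x (Finset.mem_inter.2 ⟨h2 hx', hx'⟩))
      · rfl
      · rfl
    rw [hB, mul_zero, add_zero, mul_one]
    unfold cJ
    congr 2
    ext i
    simp only [Function.comp, tupJ, ← hu]
    congr 1
    by_cases hs : γ (u i) = u i
    · exact hv3 _ hs
    · apply hv4
      apply hA
      rw [Finset.mem_inter]
      refine ⟨?_, Equiv.Perm.mem_support.2 hs⟩
      rcases hmem i with h5 | h5
      · rw [h5] at hs
        exact absurd hz hs
      · exact h5
  · rw [if_neg hA, zero_add]
    by_cases hB : γ.support ⊆ J.1 ∧ ∀ j ∈ γ.support, h (fst j) = fst j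
    · rw [if_pos hB.1, if_pos hB.2, mul_one]
      obtain ⟨σ, hσ, hsign⟩ := sign_induced huinj γ (by
        intro j hj
        rw [hur]
        exact Or.inr (hB.1 (Equiv.Perm.mem_support.2 hj)))
      rw [← hsign]
      have e : (ptJ J.1 ∘ blk) ∘ g ∘ h ∘ tupJ fst z J = (ptJ J.1 ∘ u) ∘ σ := by
        rw [Function.comp_assoc (ptJ J.1) u, ← hσ]
        ext i
        simp only [Function.comp, tupJ, ← hu]
        congr 1
        by_cases hs : γ (u i) = u i
        · rw [hv3 _ hs, hs]
        · exact hv2 _ (hB.2 _ (Equiv.Perm.mem_support.2 hs))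
      rw [e]
      unfold cJ
      rw [mul_comm, ← Matrix.det_permute]
      rfl
    · have hB' : (if γ.support ⊆ J.1 then (if ∀ j ∈ γ.support, h (fst j) = fst j then (1 : ℚ) else 0)
        else 0) = 0 := by
        split_ifs with h2 h3
        · exact absurd ⟨h2, h3⟩ hB
        · rfl
        · rfl
      rw [hB', mul_zero, mul_zero]
      let S : Finset (Fin p) := (J.1 ∩ γ.support).filter (fun j => h (fst j) = fst j)
      have hS : ∀ j, j ∈ S ↔ (j ∈ J.1 ∧ γ j ≠ j) ∧ h (fst j) = fst j := by
        intro j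
        simp [S]
      have hex : ∃ j ∈ S, γ j ∉ S := by
        by_contra hcon
        push Not at hcon hA
        obtain ⟨j0, hj0, hj0'⟩ := hA
        have hj0S : j0 ∈ S := Finset.mem_filter.2 ⟨hj0, hj0'⟩
        have hpow : ∀ k : ℕ, (γ ^ k) j0 ∈ S := by
          intro k
          induction k with
          | zero => simpa using hj0S
          | succ k ih =>
            rw [pow_succ', Equiv.Perm.mul_apply]
            exact hcon _ ih
        have hall : ∀ j ∈ γ.support, j ∈ S := by
          intro j hj
          obtain ⟨k, hk⟩ := hγ.exists_pow_eq ((hS j0).1 hj0S).1.2 (Equiv.Perm.mem_support.1 hj)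
          rw [← hk]
          exact hpow k
        exact hB ⟨fun j hj => ((hS j).1 (hall j hj)).1.1, fun j hj => ((hS j).1 (hall j hj)).2⟩
      obtain ⟨j, hjS, hjn⟩ := hex
      obtain ⟨⟨hjJ, hjγ⟩, hjf⟩ := (hS j).1 hjS
      rw [Matrix.det_vandermonde_eq_zero_iff]
      obtain ⟨i, hi⟩ : j ∈ Set.range u := by
        rw [hur]; exact Or.inr hjJ
      by_cases hγJ : γ j ∈ J.1
      · obtain ⟨k, hk⟩ : γ j ∈ Set.range u := by
          rw [hur]; exact Or.inr hγJ
        refine ⟨i, k, ?_, ?_⟩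
        · simp only [Function.comp, tupJ, ← hu, hi, hk]
          congr 1
          rw [hv2 j hjf, hv4]
          intro h6
          apply hjn
          rw [hS]
          exact ⟨⟨hγJ, fun h7 => hjγ (γ.injective h7)⟩, h6⟩
        · rintro rfl
          rw [hi] at hk
          exact hjγ hk.symm
      · obtain ⟨k, hk⟩ : z ∈ Set.range u := by
          rw [hur]; exact Or.inl rfl
        refine ⟨i, k, ?_, ?_⟩
        · simp only [Function.comp, tupJ, ← hu, hi, hk]
          rw [hv2 j hjf, hv3 z hz]
          simp [ptJ, hγJ, J.notMem]
        · rintro rfl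
          rw [hi] at hk
          subst hk
          exact hjγ hz

end Abstract2

section Abstract3

set_option linter.unusedSectionVars false

variable {α : Type*} [Fintype α] [DecidableEq α] {p b : ℕ} (blk : α → Fin p)
  (fst : Fin p → α) (z : Fin p)

theorem prod_ind {ι : Type*} [Fintype ι] [DecidableEq ι] (A : Finset ι) (P : ι → Prop)
    [DecidablePred P] [Decidable (∀ j ∈ A, P j)] :
    (if ∀ j ∈ A, P j then (1 : ℚ) else 0) = ∏ j, (if j ∈ A then (if P j then 1 else 0) else 1) := by
  rw [Finset.prod_ite_mem, Finset.univ_inter]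
  simp [Finset.prod_boole]

theorem avg_all (h1 : ∀ j, blk (fst j) = j) (A : Finset (Fin p)) (n : Fin p → ℕ)
    (hn : ∀ j, (Finset.univ.filter (fun a => blk a = j)).card = n j) :
    ∑ h ∈ blkGroup blk, (if ∀ j ∈ A, h (fst j) = fst j then (1 : ℚ) else 0) =
      ((blkGroup blk).card : ℚ) * ∏ j ∈ A, (1 / (n j : ℚ)) := by
  have hpos : ∀ j, (n j : ℚ) ≠ 0 := by
    intro j
    rw [← hn j]
    have : 0 < (Finset.univ.filter (fun a => blk a = j)).card :=
      Finset.card_pos.2 ⟨fst j, by simp [h1]⟩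
    positivity
  have e : ∀ h : Equiv.Perm α, (if ∀ j ∈ A, h (fst j) = fst j then (1 : ℚ) else 0) =
      ∏ j, (fun j a => if j ∈ A then (if a = fst j then (1 : ℚ) else 0) else 1) j (h (fst j)) :=
    fun h => prod_ind A _
  simp only [e]
  rw [sum_blkGroup_prod blk fst h1 (fun j a => if j ∈ A then (if a = fst j then (1 : ℚ) else 0) else 1)]
  congr 1
  rw [← Finset.univ_inter A, ← Finset.prod_ite_mem]
  apply Finset.prod_congr rfl
  intro j _
  rw [hn]
  by_cases hj : j ∈ A
  · simp [hj, Finset.sum_ite_eq', h1]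
  · simp only [hj, if_false, Finset.sum_const, hn, nsmul_eq_mul, mul_one, Finset.univ_inter]
    exact div_self (hpos j)

theorem avg_none (h1 : ∀ j, blk (fst j) = j) (A : Finset (Fin p)) (n : Fin p → ℕ)
    (hn : ∀ j, (Finset.univ.filter (fun a => blk a = j)).card = n j) :
    ∑ h ∈ blkGroup blk, (if ∀ j ∈ A, h (fst j) ≠ fst j then (1 : ℚ) else 0) =
      ((blkGroup blk).card : ℚ) * ∏ j ∈ A, (((n j : ℚ) - 1) / (n j : ℚ)) := by
  have hpos : ∀ j, (n j : ℚ) ≠ 0 := by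
    intro j
    rw [← hn j]
    have : 0 < (Finset.univ.filter (fun a => blk a = j)).card :=
      Finset.card_pos.2 ⟨fst j, by simp [h1]⟩
    positivity
  have e : ∀ h : Equiv.Perm α, (if ∀ j ∈ A, h (fst j) ≠ fst j then (1 : ℚ) else 0) =
      ∏ j, (fun j a => if j ∈ A then (if a ≠ fst j then (1 : ℚ) else 0) else 1) j (h (fst j)) :=
    fun h => prod_ind A _
  simp only [e]
  rw [sum_blkGroup_prod blk fst h1 (fun j a => if j ∈ A then (if a ≠ fst j then (1 : ℚ) else 0) else 1)]
  congr 1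
  rw [← Finset.univ_inter A, ← Finset.prod_ite_mem]
  apply Finset.prod_congr rfl
  intro j _
  rw [hn]
  by_cases hj : j ∈ A
  · have : ∀ a, (if a ≠ fst j then (1 : ℚ) else 0) = 1 - (if a = fst j then 1 else 0) := by
      intro a
      by_cases ha : a = fst j <;> simp [ha]
    simp only [hj, if_true, this, Finset.sum_sub_distrib, Finset.sum_const, hn, Finset.univ_inter]
    simp [Finset.sum_ite_eq', h1]
  · simp only [hj, if_false, Finset.sum_const, hn, nsmul_eq_mul, mul_one, Finset.univ_inter]
    exact div_self (hpos j)

theorem eval_T_basD (h1 : ∀ j, blk (fst j) = j) (γ : Equiv.Perm (Fin p)) (hγ : γ.IsCycle) (hz : γ z = z)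
    (g : Equiv.Perm α) (hg1 : ∀ j, g (fst j) = fst (γ j)) (hg2 : ∀ a, a ≠ fst (blk a) → g a = a)
    (n : Fin p → ℕ) (hn : ∀ j, (Finset.univ.filter (fun a => blk a = j)).card = n j)
    (J : IdxJ p b z) :
    MvPolynomial.eval (ptJ J.1 ∘ blk) (blkRho blk (permAct g (basD blk fst z J))) =
      cJ z J * (∏ j ∈ J.1 ∩ γ.support, (((n j : ℚ) - 1) / (n j : ℚ)) +
        ((Equiv.Perm.sign γ : ℤ) : ℚ) *
          (if γ.support ⊆ J.1 then ∏ j ∈ γ.support, (1 / (n j : ℚ)) else 0)) := by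
  rw [eval_blkRho_ptJ, eval_permAct]
  unfold basD
  rw [eval_blkRho]
  simp only [eval_vdm, Function.comp_assoc]
  have hpt := fun h hh => pointwise_det blk fst z h1 γ hγ hz g hg1 hg2 h hh J
  simp only [Function.comp_assoc] at hpt
  rw [Finset.sum_congr rfl hpt,
    ← Finset.mul_sum, Finset.sum_add_distrib, avg_none blk fst h1 _ n hn, ← Finset.mul_sum]
  have hc := blkGroup_card_ne blk
  by_cases hs : γ.support ⊆ J.1
  · simp only [hs, if_true]
    rw [avg_all blk fst h1 _ n hn]
    field_simp
  · simp only [hs, if_false]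
    simp only [Finset.sum_const_zero]
    field_simp
    ring

theorem trace_of_expansion {W κ : Type*} [AddCommGroup W] [Module ℚ W] [FiniteDimensional ℚ W]
    [Fintype κ] (T : W →ₗ[ℚ] W) (D : κ → W) (ψ : κ → W →ₗ[ℚ] ℚ)
    (h : ∀ f, T f = ∑ J, ψ J f • D J) : LinearMap.trace ℚ W T = ∑ J, ψ J (D J) := by
  have : T = ∑ J, (ψ J).smulRight (D J) := by
    ext f
    rw [h]
    simp
  rw [this, map_sum]
  simp

theorem trace_abstract (h1 : ∀ j, blk (fst j) = j) (W : Submodule ℚ (MvPolynomial α ℚ))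
    (hWdef : W = Submodule.span ℚ (Set.range (vdm : (Fin (b + 1) → α) → MvPolynomial α ℚ)))
    (γ : Equiv.Perm (Fin p)) (hγ : γ.IsCycle) (hz : γ z = z)
    (g : Equiv.Perm α) (hg1 : ∀ j, g (fst j) = fst (γ j)) (hg2 : ∀ a, a ≠ fst (blk a) → g a = a)
    (n : Fin p → ℕ) (hn : ∀ j, (Finset.univ.filter (fun a => blk a = j)).card = n j)
    (hW : ∀ f ∈ W, ((blkRho blk).comp (permAct g)) f ∈ W) :
    LinearMap.trace ℚ W (((blkRho blk).comp (permAct g)).restrict hW) =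
      ∑ J ∈ (Finset.univ.erase z).powersetCard b,
        (∏ j ∈ J ∩ γ.support, (((n j : ℚ) - 1) / (n j : ℚ)) +
        ((Equiv.Perm.sign γ : ℤ) : ℚ) *
          (if γ.support ⊆ J then ∏ j ∈ γ.support, (1 / (n j : ℚ)) else 0)) := by
  have hfin : FiniteDimensional ℚ W := by
    rw [hWdef]
    exact FiniteDimensional.span_of_finite ℚ (Set.finite_range _)
  have hD : ∀ J : IdxJ p b z, basD blk fst z J ∈ W := by
    intro J
    unfold basD
    rw [blkRho_apply, hWdef]
    refine Submodule.smul_mem _ _ (Submodule.sum_mem _ fun h _ => ?_)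
    rw [permAct_vdm]
    exact Submodule.subset_span ⟨_, rfl⟩
  let T := ((blkRho blk).comp (permAct g)).restrict hW
  let ψ : IdxJ p b z → W →ₗ[ℚ] ℚ := fun J =>
    (cJ z J)⁻¹ • ((MvPolynomial.aeval (R := ℚ) (ptJ J.1 ∘ blk)).toLinearMap ∘ₗ W.subtype ∘ₗ T)
  have hψ : ∀ J f, ψ J f = (cJ z J)⁻¹ *
      MvPolynomial.eval (ptJ J.1 ∘ blk) (blkRho blk (permAct g (f : MvPolynomial α ℚ))) := by
    intro J f
    simp only [ψ, T, LinearMap.smul_apply, smul_eq_mul, LinearMap.comp_apply,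
      AlgHom.toLinearMap_apply, Submodule.subtype_apply]
    rfl
  have hspan : ∀ f ∈ W, blkRho blk (permAct g f) ∈
      Submodule.span ℚ (Set.range (basD (b := b) blk fst z)) := by
    intro f hf
    rw [hWdef] at hf
    induction hf using Submodule.span_induction with
    | mem x hx =>
      obtain ⟨t, rfl⟩ := hx
      rw [permAct_vdm]
      exact blkRho_vdm_mem_span blk fst z h1 _
    | zero => simp
    | add x y _ _ hx hy =>
      rw [map_add, map_add]
      exact Submodule.add_mem _ hx hy
    | smul c x _ hx =>
      rw [map_smul, map_smul]
      exact Submodule.smul_mem _ _ hx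
  have hT : ∀ f, T f = ∑ J, ψ J f • (⟨basD blk fst z J, hD J⟩ : W) := by
    intro f
    apply Subtype.ext
    have e0 : ((T f : W) : MvPolynomial α ℚ) = blkRho blk (permAct g (f : MvPolynomial α ℚ)) := rfl
    obtain ⟨c, hc⟩ := (Submodule.mem_span_range_iff_exists_fun ℚ).1 (hspan f f.2)
    have hcJ : ∀ J, ψ J f = c J := by
      intro J
      rw [hψ, ← hc, map_sum]
      simp only [MvPolynomial.smul_eval, eval_basD blk fst z h1]
      rw [Finset.sum_eq_single J]
      · rw [if_pos rfl]
        have := cJ_ne_zero z J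
        field_simp
      · intro J' _ hJ'
        rw [if_neg hJ', mul_zero]
      · simp
    rw [e0, ← hc]
    simp [hcJ]
  change LinearMap.trace ℚ W T = _
  rw [trace_of_expansion T _ ψ hT]
  rw [← Finset.sum_coe_sort ((Finset.univ.erase z).powersetCard b)]
  refine Finset.sum_congr rfl fun J _ => ?_
  rw [hψ, eval_T_basD blk fst z h1 γ hγ hz g hg1 hg2 n hn J]
  have := cJ_ne_zero z J
  field_simp

end Abstract3

/-! ### Combinatorics -/

theorem poch_div_factorial (b k : ℕ) :
    poch ((b : ℚ) + 1) k / (Nat.factorial k : ℚ) = ((b + k).choose b : ℚ) := by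
  have h : poch ((b : ℚ) + 1) k * (b.factorial : ℚ) = ((b + k).factorial : ℚ) := by
    induction k with
    | zero => simp [poch]
    | succ k ih =>
      unfold poch at *
      rw [Finset.prod_range_succ, ← add_assoc, Nat.factorial_succ]
      push_cast
      rw [← ih]
      ring
  have h2 : ((b + k).choose b : ℚ) * b.factorial * k.factorial = ((b + k).factorial : ℚ) := by
    have := Nat.add_choose_mul_factorial_mul_factorial b k
    rw [← Nat.choose_symm_add] at this
    exact_mod_cast this
  have hb : (b.factorial : ℚ) ≠ 0 := by positivity
  have hk : (k.factorial : ℚ) ≠ 0 := by positivity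
  rw [div_eq_iff hk]
  apply mul_right_cancel₀ hb
  rw [h, ← h2]
  ring

theorem count_sup {p b : ℕ} (z : Fin p) (L : Finset (Fin p)) (hz : z ∉ L) :
    (((Finset.univ.erase z).powersetCard b).filter (fun J => L ⊆ J)).card =
      if L.card ≤ b then (p - 1 - L.card).choose (b - L.card) else 0 := by
  split_ifs with h
  · have : (((Finset.univ.erase z).powersetCard b).filter (fun J => L ⊆ J)).card =
        ((Finset.univ.erase z \ L).powersetCard (b - L.card)).card := by
      refine Finset.card_bij' (fun J _ => J \ L) (fun J _ => J ∪ L) ?_ ?_ ?_ ?_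
      · intro J hJ
        simp only [Finset.mem_filter, Finset.mem_powersetCard] at hJ ⊢
        refine ⟨Finset.sdiff_subset_sdiff hJ.1.1 (le_refl _), ?_⟩
        rw [Finset.card_sdiff_of_subset hJ.2, hJ.1.2]
      · intro J hJ
        simp only [Finset.mem_filter, Finset.mem_powersetCard] at hJ ⊢
        have hd : Disjoint J L := Finset.disjoint_of_subset_left hJ.1 Finset.sdiff_disjoint
        refine ⟨⟨Finset.union_subset (hJ.1.trans Finset.sdiff_subset) ?_, ?_⟩,
          Finset.subset_union_right⟩
        · intro x hx
          simp only [Finset.mem_erase, Finset.mem_univ, and_true]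
          rintro rfl
          exact hz hx
        · rw [Finset.card_union_of_disjoint hd, hJ.2]
          omega
      · intro J hJ
        simp only [Finset.mem_filter, Finset.mem_powersetCard] at hJ
        exact Finset.sdiff_union_of_subset hJ.2
      · intro J hJ
        simp only [Finset.mem_powersetCard] at hJ
        have hd : Disjoint J L := Finset.disjoint_of_subset_left hJ.1 Finset.sdiff_disjoint
        exact Finset.union_sdiff_cancel_right hd
    rw [this, Finset.card_powersetCard, Finset.card_sdiff_of_subset, Finset.card_erase_of_mem,
      Finset.card_univ, Fintype.card_fin]
    · simp
    · intro x hx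
      simp only [Finset.mem_erase, Finset.mem_univ, and_true]
      rintro rfl
      exact hz hx
  · rw [Finset.card_eq_zero, Finset.filter_eq_empty_iff]
    intro J hJ hL
    apply h
    rw [← (Finset.mem_powersetCard.1 hJ).2]
    exact Finset.card_le_card hL

theorem count_inter {p b : ℕ} (z : Fin p) (L B : Finset (Fin p)) (hz : z ∉ L) (hB : B ⊆ L) :
    (((Finset.univ.erase z).powersetCard b).filter (fun J => J ∩ L ⊆ B)).card =
      (p - 1 - L.card + B.card).choose b := by
  have hLs : L ⊆ Finset.univ.erase z := by
    intro x hx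
    simp only [Finset.mem_erase, Finset.mem_univ, and_true]
    rintro rfl
    exact hz hx
  have : ((Finset.univ.erase z).powersetCard b).filter (fun J => J ∩ L ⊆ B) =
      ((Finset.univ.erase z \ L) ∪ B).powersetCard b := by
    ext J
    simp only [Finset.mem_filter, Finset.mem_powersetCard]
    constructor
    · rintro ⟨⟨h1, h2⟩, h3⟩
      refine ⟨fun x hx => ?_, h2⟩
      by_cases hxL : x ∈ L
      · exact Finset.mem_union_right _ (h3 (Finset.mem_inter.2 ⟨hx, hxL⟩))
      · exact Finset.mem_union_left _ (Finset.mem_sdiff.2 ⟨h1 hx, hxL⟩)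
    · rintro ⟨h1, h2⟩
      refine ⟨⟨fun x hx => ?_, h2⟩, fun x hx => ?_⟩
      · rcases Finset.mem_union.1 (h1 hx) with h | h
        · exact (Finset.mem_sdiff.1 h).1
        · exact hLs (hB h)
      · obtain ⟨h3, h4⟩ := Finset.mem_inter.1 hx
        rcases Finset.mem_union.1 (h1 h3) with h | h
        · exact absurd h4 (Finset.mem_sdiff.1 h).2
        · exact h
  rw [this, Finset.card_powersetCard, Finset.card_union_of_disjoint
    (Finset.disjoint_of_subset_right hB Finset.sdiff_disjoint),
    Finset.card_sdiff_of_subset hLs, Finset.card_erase_of_mem (Finset.mem_univ _),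
    Finset.card_univ, Fintype.card_fin]

theorem prod_expand {p : ℕ} (L J : Finset (Fin p)) (n : Fin p → ℚ) (hn : ∀ j, n j ≠ 0) :
    ∏ j ∈ J ∩ L, ((n j - 1) / n j) =
      (∏ j ∈ L, n j)⁻¹ * ∑ B ∈ L.powerset, if J ∩ L ⊆ B then ∏ j ∈ B, (n j - 1) else 0 := by
  have hp : ∀ A : Finset (Fin p), ∏ j ∈ A, n j ≠ 0 := fun A => Finset.prod_ne_zero_iff.2 fun j _ => hn j
  have h1 : ∏ j ∈ L, n j = (∏ j ∈ L \ (J ∩ L), n j) * ∏ j ∈ J ∩ L, n j :=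
    (Finset.prod_sdiff Finset.inter_subset_right).symm
  have h2 : ∏ j ∈ L \ (J ∩ L), n j = ∑ A ∈ (L \ (J ∩ L)).powerset, ∏ j ∈ A, (n j - 1) := by
    rw [← Finset.prod_one_add]
    simp
  have h3 : ∑ B ∈ L.powerset, (if J ∩ L ⊆ B then ∏ j ∈ B, (n j - 1) else 0) =
      (∏ j ∈ J ∩ L, (n j - 1)) * ∑ A ∈ (L \ (J ∩ L)).powerset, ∏ j ∈ A, (n j - 1) := by
    rw [← Finset.sum_filter, Finset.mul_sum]
    symm
    refine Finset.sum_bij' (fun A _ => (J ∩ L) ∪ A) (fun B _ => B \ (J ∩ L)) ?_ ?_ ?_ ?_ ?_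
    · intro A hA
      simp only [Finset.mem_filter, Finset.mem_powerset] at hA ⊢
      exact ⟨Finset.union_subset Finset.inter_subset_right (hA.trans Finset.sdiff_subset),
        Finset.subset_union_left⟩
    · intro B hB
      simp only [Finset.mem_filter, Finset.mem_powerset] at hB ⊢
      exact Finset.sdiff_subset_sdiff hB.1 (le_refl _)
    · intro A hA
      simp only [Finset.mem_powerset] at hA
      have hd : Disjoint A (J ∩ L) := Finset.disjoint_of_subset_left hA Finset.sdiff_disjoint
      exact Finset.union_sdiff_cancel_left hd.symm
    · intro B hB
      simp only [Finset.mem_filter, Finset.mem_powerset] at hB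
      exact Finset.union_sdiff_of_subset hB.2
    · intro A hA
      simp only [Finset.mem_powerset] at hA
      have hd : Disjoint A (J ∩ L) := Finset.disjoint_of_subset_left hA Finset.sdiff_disjoint
      rw [Finset.prod_union hd.symm]
  rw [h3, ← h2, h1, Finset.prod_div_distrib]
  have := hp (L \ (J ∩ L))
  have := hp (J ∩ L)
  field_simp

theorem comb_main {p b ℓ : ℕ} (z : Fin p) (L : Finset (Fin p)) (hz : z ∉ L) (hL : L.card = ℓ)
    (hm : b + 2 ≤ p) (hℓp : ℓ ≤ p - 1) (n : Fin p → ℕ) (hn : ∀ j, 0 < n j) (s : ℚ)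
    (hs : s = (-1) ^ (ℓ + 1)) :
    ∑ J ∈ (Finset.univ.erase z).powersetCard b,
        (∏ j ∈ J ∩ L, (((n j : ℚ) - 1) / (n j : ℚ)) +
        s * (if L ⊆ J then ∏ j ∈ L, (1 / (n j : ℚ)) else 0)) =
    (∏ i ∈ L, (n i : ℚ))⁻¹ *
        ((∑ k ∈ Finset.range (min (p - b - 1) ℓ + 1),
            poch ((b : ℚ) + 1) (p - b - 1 - k) / (Nat.factorial (p - b - 1 - k)) *
              esymVal L (ℓ - k) (fun i => (n i : ℚ) - 1))
          + (-1 : ℚ) ^ (ℓ + 1) * poch ((b : ℚ) - (ℓ : ℚ) + 1) (p - b - 1)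
              / (Nat.factorial (p - b - 1))) := by
  have hn' : ∀ j, (n j : ℚ) ≠ 0 := fun j => by have := hn j; positivity
  rw [Finset.sum_add_distrib, mul_add]
  congr 1
  · rw [Finset.sum_congr rfl (fun J _ => prod_expand L J (fun j => (n j : ℚ)) hn'),
      ← Finset.mul_sum]
    congr 1
    rw [Finset.sum_comm]
    have e1 : ∀ B ∈ L.powerset, ∑ J ∈ (Finset.univ.erase z).powersetCard b,
        (if J ∩ L ⊆ B then ∏ j ∈ B, ((n j : ℚ) - 1) else 0) =
        ((p - 1 - ℓ + B.card).choose b : ℚ) * ∏ j ∈ B, ((n j : ℚ) - 1) := by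
      intro B hB
      rw [← Finset.sum_filter, Finset.sum_const, count_inter z L B hz (Finset.mem_powerset.1 hB),
        nsmul_eq_mul, hL]
    rw [Finset.sum_congr rfl e1, Finset.sum_powerset, hL]
    have e2 : ∀ k, ∑ B ∈ L.powersetCard k,
        ((p - 1 - ℓ + B.card).choose b : ℚ) * ∏ j ∈ B, ((n j : ℚ) - 1) =
        ((p - 1 - ℓ + k).choose b : ℚ) * esymVal L k (fun i => (n i : ℚ) - 1) := by
      intro k
      unfold esymVal
      rw [Finset.mul_sum]
      refine Finset.sum_congr rfl fun B hB => ?_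
      rw [(Finset.mem_powersetCard.1 hB).2]
    simp only [e2]
    rw [← Finset.sum_range_reflect]
    have hsub : Finset.range (min (p - b - 1) ℓ + 1) ⊆ Finset.range (ℓ + 1) :=
      Finset.range_subset_range.2 (by omega)
    rw [← Finset.sum_subset hsub]
    · refine Finset.sum_congr rfl fun k hk => ?_
      rw [Finset.mem_range] at hk
      rw [poch_div_factorial, show ℓ + 1 - 1 - k = ℓ - k by omega,
        show p - 1 - ℓ + (ℓ - k) = b + (p - b - 1 - k) by omega]
    · intro k hk hk'
      rw [Finset.mem_range] at hk hk'
      rw [Nat.choose_eq_zero_of_lt (by omega)]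
      simp
  · rw [← Finset.mul_sum, ← Finset.sum_filter, Finset.sum_const, count_sup z L hz, hL, hs,
      nsmul_eq_mul]
    have : ∏ j ∈ L, (1 / (n j : ℚ)) = (∏ i ∈ L, (n i : ℚ))⁻¹ := by
      simp
    rw [this]
    have key : (((if ℓ ≤ b then (p - 1 - ℓ).choose (b - ℓ) else 0 : ℕ) : ℕ) : ℚ) =
        poch ((b : ℚ) - (ℓ : ℚ) + 1) (p - b - 1) / (Nat.factorial (p - b - 1)) := by
      split_ifs with h
      · have e := poch_div_factorial (b - ℓ) (p - b - 1)
        rw [Nat.cast_sub h] at e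
        rw [e, show p - 1 - ℓ = b - ℓ + (p - b - 1) by omega]
      · have : poch ((b : ℚ) - (ℓ : ℚ) + 1) (p - b - 1) = 0 := by
          unfold poch
          apply Finset.prod_eq_zero (i := ℓ - b - 1)
          · rw [Finset.mem_range]; omega
          · rw [Nat.sub_sub, Nat.cast_sub (by omega)]
            push_cast
            ring
        rw [this]
        simp
    rw [key]
    ring

/-! ### Passing from the concrete to the abstract setting -/

theorem emb_injective {p : ℕ} (n : Fin p → ℕ) :
    Function.Injective (fun x : Σ j, Fin (n j) => emb n x.1 x.2) := by
  have key : ∀ (j j' : Fin p) (i : Fin (n j)) (i' : Fin (n j')), j < j' →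
      (emb n j i : ℕ) < (emb n j' i' : ℕ) := by
    intro j j' i i' hlt
    have hj : j ∉ Finset.univ.filter (fun t => t < j) := by simp
    have h2 : ∑ t ∈ insert j (Finset.univ.filter (fun t => t < j)), n t ≤
        ∑ t ∈ Finset.univ.filter (fun t => t < j'), n t := by
      apply Finset.sum_le_sum_of_subset
      intro t ht
      simp only [Finset.mem_insert, Finset.mem_filter, Finset.mem_univ, true_and] at ht ⊢
      rcases ht with rfl | ht
      · exact hlt
      · exact ht.trans hlt
    rw [Finset.sum_insert hj] at h2
    have := i.isLt
    simp only [emb]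
    omega
  rintro ⟨j, i⟩ ⟨j', i'⟩ h
  have hv : (emb n j i : ℕ) = (emb n j' i' : ℕ) := congrArg Fin.val h
  rcases lt_trichotomy j j' with hlt | rfl | hlt
  · have := key j j' i i' hlt
    omega
  · simp only [emb] at hv
    have : i = i' := Fin.ext (by omega)
    rw [this]
  · have := key j' j i' i hlt
    omega

/-- the block decomposition as an equivalence -/
def embEquiv {p : ℕ} (n : Fin p → ℕ) : (Σ j, Fin (n j)) ≃ Fin (∑ t, n t) :=
  Equiv.ofBijective (fun x : Σ j, Fin (n j) => emb n x.1 x.2)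
    ((Fintype.bijective_iff_injective_and_card _).2 ⟨emb_injective n, by simp⟩)

theorem embEquiv_apply {p : ℕ} (n : Fin p → ℕ) (j : Fin p) (i : Fin (n j)) :
    embEquiv n ⟨j, i⟩ = emb n j i := rfl

/-- block of an index -/
def blkOf {p : ℕ} (n : Fin p → ℕ) (a : Fin (∑ t, n t)) : Fin p := ((embEquiv n).symm a).1

theorem blkOf_emb {p : ℕ} (n : Fin p → ℕ) (j : Fin p) (i : Fin (n j)) :
    blkOf n (emb n j i) = j := by
  unfold blkOf
  rw [← embEquiv_apply, Equiv.symm_apply_apply]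

theorem exists_emb {p : ℕ} (n : Fin p → ℕ) (a : Fin (∑ t, n t)) :
    ∃ i : Fin (n (blkOf n a)), a = emb n (blkOf n a) i :=
  ⟨((embEquiv n).symm a).2, ((embEquiv n).apply_symm_apply a).symm⟩

theorem youngGroup_eq {p : ℕ} (n : Fin p → ℕ) : youngGroup n = blkGroup (blkOf n) := by
  ext w
  simp only [youngGroup, blkGroup, Finset.mem_filter, Finset.mem_univ, true_and]
  constructor
  · intro h a
    obtain ⟨i, hi⟩ := exists_emb n a
    obtain ⟨i', hi'⟩ := h _ i
    rw [← hi] at hi'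
    rw [hi', blkOf_emb]
  · intro h j i
    obtain ⟨i', hi'⟩ := exists_emb n (w (emb n j i))
    have hb : blkOf n (w (emb n j i)) = j := by rw [h, blkOf_emb]
    generalize w (emb n j i) = a at *
    subst hb
    exact ⟨i', hi'⟩

theorem rho_eq {p : ℕ} (n : Fin p → ℕ) : rho n = blkRho (blkOf n) := by
  unfold rho blkRho
  rw [youngGroup_eq]

theorem card_blk {p : ℕ} (n : Fin p → ℕ) (j : Fin p) :
    (Finset.univ.filter (fun a => blkOf n a = j)).card = n j := by
  have : Finset.univ.filter (fun a => blkOf n a = j) = Finset.univ.image (emb n j) := by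
    ext a
    simp only [Finset.mem_filter, Finset.mem_univ, true_and, Finset.mem_image]
    constructor
    · rintro rfl
      obtain ⟨i, hi⟩ := exists_emb n a
      exact ⟨i, hi.symm⟩
    · rintro ⟨i, rfl⟩
      exact blkOf_emb n j i
  rw [this, Finset.card_image_of_injective]
  · simp
  · intro i i' h
    have := @emb_injective p n ⟨j, i⟩ ⟨j, i'⟩ h
    simpa using this

theorem Delta_eq {N b : ℕ} (t : Fin (b + 1) → Fin N) :
    Delta t = (-1 : ℚ) ^ (Finset.univ.filter
      (fun q : Fin (b + 1) × Fin (b + 1) => q.1 < q.2)).card • vdm t := by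
  have h : vdm t = ∏ q ∈ Finset.univ.filter (fun q : Fin (b + 1) × Fin (b + 1) => q.1 < q.2),
      (X (t q.2) - X (t q.1) : MvPolynomial (Fin N) ℚ) := by
    unfold vdm
    rw [Matrix.det_vandermonde, Finset.prod_filter, Fintype.prod_prod_type]
    refine Finset.prod_congr rfl fun i _ => ?_
    rw [← Finset.prod_filter]
    refine Finset.prod_congr ?_ fun _ _ => rfl
    ext j
    simp
  unfold Delta
  rw [h, MvPolynomial.smul_eq_C_mul, map_pow, map_neg, map_one, ← Finset.prod_const,
    ← Finset.prod_mul_distrib]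
  refine Finset.prod_congr rfl fun q _ => ?_
  ring

theorem hookSpan_eq (N b : ℕ) : hookSpan N b =
    Submodule.span ℚ (Set.range (vdm : (Fin (b + 1) → Fin N) → MvPolynomial (Fin N) ℚ)) := by
  unfold hookSpan
  apply le_antisymm
  · rw [Submodule.span_le]
    rintro _ ⟨t, _, rfl⟩
    rw [Delta_eq]
    exact Submodule.smul_mem _ _ (Submodule.subset_span ⟨t, rfl⟩)
  · rw [Submodule.span_le]
    rintro _ ⟨t, rfl⟩
    by_cases ht : Function.Injective t
    · let J : Finset (Fin N) := Finset.univ.image t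
      have hJ : J.card = b + 1 := by
        simp [J, Finset.card_image_of_injective _ ht]
      have hr : Set.range t = Set.range (J.orderEmbOfFin hJ) := by
        rw [Finset.range_orderEmbOfFin]
        simp [J]
      obtain ⟨σ, hσ⟩ := exists_perm_of_range_eq ht (J.orderEmbOfFin hJ).injective hr
      rw [hσ, vdm_comp_perm, ← zsmul_eq_mul]
      apply Submodule.smul_of_tower_mem
      have hD := Delta_eq (J.orderEmbOfFin hJ)
      set c := (Finset.univ.filter (fun q : Fin (b + 1) × Fin (b + 1) => q.1 < q.2)).card
      have h2 : vdm (J.orderEmbOfFin hJ) = (-1 : ℚ) ^ c • Delta (J.orderEmbOfFin hJ) := by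
        rw [hD, smul_smul, ← mul_pow]
        simp
      rw [h2]
      exact Submodule.smul_mem _ _ (Submodule.subset_span
        ⟨_, (J.orderEmbOfFin hJ).strictMono, rfl⟩)
    · rw [vdm_eq_zero t ht]
      exact Submodule.zero_mem _

theorem sphericalFunction_hook_l_le_b_add_m (p b ℓ : ℕ) (n : Fin p → ℕ) (hn : ∀ j, 0 < n j)
    (hm : b + 2 ≤ p) (hℓ2 : 2 ≤ ℓ) (hℓp : ℓ ≤ p - 1)
    (g : Equiv.Perm (Fin (∑ t, n t)))
    (hg1 : ∀ j k : Fin p, (k : ℕ) = (j : ℕ) + 1 → (k : ℕ) < ℓ →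
      g (emb n j ⟨0, hn j⟩) = emb n k ⟨0, hn k⟩)
    (hg2 : ∀ j j' : Fin p, (j : ℕ) = ℓ - 1 → (j' : ℕ) = 0 →
      g (emb n j ⟨0, hn j⟩) = emb n j' ⟨0, hn j'⟩)
    (hg3 : ∀ a, (∀ j : Fin p, (j : ℕ) < ℓ → a ≠ emb n j ⟨0, hn j⟩) → g a = a)
    (hW : ∀ f ∈ hookSpan (∑ t, n t) b,
      ((rho n).comp (permAct g)) f ∈ hookSpan (∑ t, n t) b) :
    LinearMap.trace ℚ (hookSpan (∑ t, n t) b) (((rho n).comp (permAct g)).restrict hW)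
      = (∏ i ∈ firstL p ℓ, (n i : ℚ))⁻¹ *
        ((∑ k ∈ Finset.range (min (p - b - 1) ℓ + 1),
            poch ((b : ℚ) + 1) (p - b - 1 - k) / (Nat.factorial (p - b - 1 - k)) *
              esymVal (firstL p ℓ) (ℓ - k) (fun i => (n i : ℚ) - 1))
          + (-1 : ℚ) ^ (ℓ + 1) * poch ((b : ℚ) - (ℓ : ℚ) + 1) (p - b - 1)
              / (Nat.factorial (p - b - 1))) := by
  have hp : 0 < p := by omega
  have : NeZero p := ⟨by omega⟩
  let c : Fin p := ⟨ℓ - 1, by omega⟩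
  let γ : Equiv.Perm (Fin p) := Fin.cycleRange c
  let z : Fin p := ⟨p - 1, by omega⟩
  let fst : Fin p → Fin (∑ t, n t) := fun j => emb n j ⟨0, hn j⟩
  have hfst : ∀ j, blkOf n (fst j) = j := fun j => blkOf_emb n j _
  have hγ : γ.IsCycle := Fin.isCycle_cycleRange (by
    intro h
    have := congrArg Fin.val h
    simp [c] at this
    omega)
  have hgt : ∀ j : Fin p, ℓ ≤ (j : ℕ) → γ j = j := fun j hj =>
    Fin.cycleRange_of_gt (Fin.lt_def.2 (by simp only [c]; omega))
  have hlt : ∀ j : Fin p, (j : ℕ) < ℓ - 1 → (γ j : ℕ) = j + 1 := fun j hj =>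
    Fin.coe_cycleRange_of_lt (Fin.lt_def.2 (by simpa only [c] using hj))
  have heq : ∀ j : Fin p, (j : ℕ) = ℓ - 1 → (γ j : ℕ) = 0 := fun j hj => by
    have : γ j = 0 := Fin.cycleRange_of_eq (Fin.ext (by simpa only [c] using hj))
    rw [this]
    rfl
  have hz : γ z = z := hgt z (by simp only [z]; omega)
  have hsupp : γ.support = firstL p ℓ := by
    ext j
    simp only [firstL, Equiv.Perm.mem_support, Finset.mem_filter, Finset.mem_univ, true_and]
    constructor
    · intro h
      by_contra h2
      exact h (hgt j (by omega))
    · intro h h2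
      have h3 := congrArg Fin.val h2
      rcases lt_or_eq_of_le (show (j : ℕ) ≤ ℓ - 1 by omega) with h4 | h4
      · have := hlt j h4
        omega
      · have := heq j h4
        omega
  have hcard : (firstL p ℓ).card = ℓ := by
    unfold firstL
    rw [Fin.card_filter_val_lt]
    omega
  have hg1' : ∀ j, g (fst j) = fst (γ j) := by
    intro j
    by_cases h : (j : ℕ) < ℓ
    · rcases lt_or_eq_of_le (show (j : ℕ) ≤ ℓ - 1 by omega) with h4 | h4
      · exact hg1 j (γ j) (hlt j h4) (by rw [hlt j h4]; omega)
      · exact hg2 j (γ j) h4 (heq j h4)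
    · rw [hgt j (by omega)]
      apply hg3
      intro j' hj' he
      have h5 := congrArg (blkOf n) he
      rw [hfst, blkOf_emb] at h5
      rw [h5] at h
      exact h hj'
  have hg2' : ∀ a, a ≠ fst (blkOf n a) → g a = a := by
    intro a ha
    apply hg3
    intro j _ he
    apply ha
    have h5 : blkOf n a = j := by rw [he, blkOf_emb]
    rw [h5]
    exact he
  have hsign : ((Equiv.Perm.sign γ : ℤ) : ℚ) = (-1) ^ (ℓ + 1) := by
    have h6 : Equiv.Perm.sign γ = (-1) ^ (ℓ - 1) := Fin.sign_cycleRange c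
    rw [h6, show ℓ + 1 = (ℓ - 1) + 2 by omega, pow_add]
    simp
  have htr : ∀ R : MvPolynomial (Fin (∑ t, n t)) ℚ →ₗ[ℚ] MvPolynomial (Fin (∑ t, n t)) ℚ,
      R = blkRho (blkOf n) → ∀ hW' : ∀ f ∈ hookSpan (∑ t, n t) b,
        (R.comp (permAct g)) f ∈ hookSpan (∑ t, n t) b,
      LinearMap.trace ℚ (hookSpan (∑ t, n t) b) ((R.comp (permAct g)).restrict hW') =
      ∑ J ∈ (Finset.univ.erase z).powersetCard b,
        (∏ j ∈ J ∩ γ.support, (((n j : ℚ) - 1) / (n j : ℚ)) +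
        ((Equiv.Perm.sign γ : ℤ) : ℚ) *
          (if γ.support ⊆ J then ∏ j ∈ γ.support, (1 / (n j : ℚ)) else 0)) := by
    rintro R rfl hW'
    exact trace_abstract (blkOf n) fst z hfst _ (hookSpan_eq _ b) γ hγ hz g hg1' hg2' n
      (card_blk n) hW'
  rw [htr (rho n) (rho_eq n) hW, hsupp]
  exact comb_main z (firstL p ℓ) (by simp [firstL, z]; omega) hcard hm hℓp n hn _ hsign

end
end

section
/- Let b ≥ 0, m ≥ 1, set ℓ := b+m+1, and let n_1,…,n_ℓ be positive integers. Then Σ_{S ⊆ {1,…,b+m}, #S = m} ∏_{i ∈ {1,…,ℓ}∖S} (n_i − 1)/n_i = ((n_ℓ − 1)/(n_1⋯n_ℓ)) · Σ_{k=0}^{m} ((b+1)_{m−k}/(m−k)!) · e_{ℓ−1−k}(n_1−1,…,n_{ℓ−1}−1). -/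
noncomputable section

theorem poch_div_aux (b j : ℕ) :
    poch ((b : ℚ) + 1) j / (Nat.factorial j) = ((b + j).choose j : ℚ) := by
  have h : poch ((b : ℚ) + 1) j = (((b + 1).ascFactorial j : ℕ) : ℚ) := by
    induction j with
    | zero => simp [poch]
    | succ j ih =>
      rw [poch, Finset.prod_range_succ, ← poch, ih, Nat.ascFactorial_succ]
      push_cast
      ring
  rw [h, Nat.ascFactorial_eq_factorial_mul_choose, div_eq_iff (by positivity)]
  push_cast
  ring

theorem count_aux (A K : Finset ℕ) (m : ℕ) (hK : K ⊆ A) (hm : K.card ≤ m) :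
    ((A.powersetCard m).filter (fun S => K ⊆ S)).card
      = (A.card - K.card).choose (m - K.card) := by
  rw [← Finset.card_sdiff_of_subset hK, ← Finset.card_powersetCard]
  refine Finset.card_nbij' (fun S => S \ K) (fun S => S ∪ K) ?_ ?_ ?_ ?_
  · intro S hS
    simp only [Finset.coe_filter, Finset.mem_powersetCard, Set.mem_setOf_eq, Finset.mem_coe] at hS ⊢
    obtain ⟨⟨h1, h2⟩, h3⟩ := hS
    exact ⟨Finset.sdiff_subset_sdiff h1 le_rfl, by rw [Finset.card_sdiff_of_subset h3, h2]⟩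
  · intro S hS
    simp only [Finset.coe_filter, Finset.mem_powersetCard, Set.mem_setOf_eq, Finset.mem_coe] at hS ⊢
    obtain ⟨h1, h2⟩ := hS
    have hd : Disjoint S K := Finset.disjoint_of_subset_left h1 Finset.sdiff_disjoint
    refine ⟨⟨Finset.union_subset (h1.trans Finset.sdiff_subset) hK, ?_⟩,
      Finset.subset_union_right⟩
    rw [Finset.card_union_of_disjoint hd]
    omega
  · intro S hS
    simp only [Finset.coe_filter, Set.mem_setOf_eq] at hS
    exact Finset.sdiff_union_of_subset hS.2
  · intro S hS
    simp only [Finset.mem_powersetCard, Finset.mem_coe] at hS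
    have hd : Disjoint S K := Finset.disjoint_of_subset_left hS.1 Finset.sdiff_disjoint
    exact Finset.union_sdiff_cancel_right hd

theorem double_aux (A : Finset ℕ) (m k : ℕ) (hk : k ≤ m) (f : Finset ℕ → ℚ) :
    ∑ S ∈ A.powersetCard m, ∑ K ∈ S.powersetCard k, f K
      = ((A.card - k).choose (m - k) : ℚ) * ∑ K ∈ A.powersetCard k, f K := by
  rw [Finset.sum_comm' (t' := A.powersetCard k)
    (s' := fun K => (A.powersetCard m).filter (fun S => K ⊆ S)), Finset.mul_sum]
  · refine Finset.sum_congr rfl fun K hK => ?_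
    rw [Finset.mem_powersetCard] at hK
    rw [Finset.sum_const, count_aux A K m hK.1 (by omega), hK.2, nsmul_eq_mul]
  · intro S K
    simp only [Finset.mem_powersetCard, Finset.mem_filter]
    constructor
    · rintro ⟨⟨h1, h2⟩, h3, h4⟩
      exact ⟨⟨⟨h1, h2⟩, h3⟩, h3.trans h1, h4⟩
    · rintro ⟨⟨⟨h1, h2⟩, h3⟩, _, h4⟩
      exact ⟨⟨h1, h2⟩, h3, h4⟩

theorem compl_aux (A : Finset ℕ) (k : ℕ) (hk : k ≤ A.card) (x : ℕ → ℚ) :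
    ∑ K ∈ A.powersetCard k, ∏ i ∈ A \ K, x i = esymVal A (A.card - k) x := by
  unfold esymVal
  refine Finset.sum_nbij' (fun K => A \ K) (fun K => A \ K) ?_ ?_ ?_ ?_ ?_
  · intro K hK
    rw [Finset.mem_powersetCard] at hK ⊢
    exact ⟨Finset.sdiff_subset, by rw [Finset.card_sdiff_of_subset hK.1, hK.2]⟩
  · intro K hK
    rw [Finset.mem_powersetCard] at hK ⊢
    exact ⟨Finset.sdiff_subset, by rw [Finset.card_sdiff_of_subset hK.1, hK.2]; omega⟩
  · intro K hK
    rw [Finset.mem_powersetCard] at hK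
    exact Finset.sdiff_sdiff_eq_self hK.1
  · intro K hK
    rw [Finset.mem_powersetCard] at hK
    exact Finset.sdiff_sdiff_eq_self hK.1
  · intro K _
    rfl

theorem expand_aux (A : Finset ℕ) (m : ℕ) (hm : m ≤ A.card) (x : ℕ → ℚ) :
    ∑ S ∈ A.powersetCard m, (∏ i ∈ A \ S, x i) * ∏ i ∈ S, (1 + x i)
      = ∑ k ∈ Finset.range (m + 1),
          ((A.card - k).choose (m - k) : ℚ) * esymVal A (A.card - k) x := by
  have h : ∀ S ∈ A.powersetCard m, (∏ i ∈ A \ S, x i) * ∏ i ∈ S, (1 + x i)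
      = ∑ k ∈ Finset.range (m + 1), ∑ K ∈ S.powersetCard k, ∏ i ∈ A \ K, x i := by
    intro S hS
    rw [Finset.mem_powersetCard] at hS
    rw [Finset.prod_add, Finset.sum_powerset, hS.2, Finset.mul_sum]
    refine Finset.sum_congr rfl fun k _ => ?_
    rw [Finset.mul_sum]
    refine Finset.sum_congr rfl fun K hK => ?_
    rw [Finset.mem_powersetCard] at hK
    rw [Finset.prod_const_one, one_mul, ← Finset.prod_union]
    · congr 1
      ext i
      have h1 := @hS.1 i
      have h2 := @hK.1 i
      simp only [Finset.mem_union, Finset.mem_sdiff]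
      tauto
    · exact Finset.disjoint_of_subset_right Finset.sdiff_subset Finset.sdiff_disjoint
  rw [Finset.sum_congr rfl h, Finset.sum_comm]
  refine Finset.sum_congr rfl fun k hk => ?_
  rw [Finset.mem_range] at hk
  rw [double_aux A m k (by omega), compl_aux A k (by omega)]

/-- Proposition 5.12 (the summation over all `S`), in the case `ℓ = b+m+1`. -/
theorem sum_over_S_eq_top (b m ℓ : ℕ) (hm : 1 ≤ m) (hℓ : ℓ = b + m + 1)
    (n : ℕ → ℕ) (hn : ∀ i ∈ Finset.Icc 1 ℓ, 0 < n i) :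
    ∑ S ∈ (Finset.Icc 1 (b + m)).powersetCard m,
        ∏ i ∈ Finset.Icc 1 ℓ \ S, ((n i : ℚ) - 1) / (n i : ℚ)
      = ((n ℓ : ℚ) - 1) / (∏ i ∈ Finset.Icc 1 ℓ, (n i : ℚ)) *
          ∑ k ∈ Finset.range (m + 1),
            poch ((b : ℚ) + 1) (m - k) / (Nat.factorial (m - k)) *
              esymVal (Finset.Icc 1 (ℓ - 1)) (ℓ - 1 - k) (fun i => (n i : ℚ) - 1) := by
  subst hℓ
  have hne : ∀ i ∈ Finset.Icc 1 (b + m + 1), (n i : ℚ) ≠ 0 := fun i hi =>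
    Nat.cast_ne_zero.mpr (hn i hi).ne'
  have hP : (∏ i ∈ Finset.Icc 1 (b + m + 1), (n i : ℚ)) ≠ 0 := Finset.prod_ne_zero_iff.mpr hne
  have hcard : (Finset.Icc 1 (b + m)).card = b + m := by simp
  have key := expand_aux (Finset.Icc 1 (b + m)) m (by omega) (fun i => (n i : ℚ) - 1)
  rw [hcard] at key
  have hR : ∑ k ∈ Finset.range (m + 1),
            poch ((b : ℚ) + 1) (m - k) / (Nat.factorial (m - k)) *
              esymVal (Finset.Icc 1 (b + m + 1 - 1)) (b + m + 1 - 1 - k) (fun i => (n i : ℚ) - 1)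
      = ∑ k ∈ Finset.range (m + 1), ((b + m - k).choose (m - k) : ℚ) *
          esymVal (Finset.Icc 1 (b + m)) (b + m - k) (fun i => (n i : ℚ) - 1) := by
    refine Finset.sum_congr rfl fun k hk => ?_
    rw [Finset.mem_range] at hk
    rw [poch_div_aux, Nat.add_sub_cancel, Nat.add_sub_assoc (by omega : k ≤ m)]
  rw [hR, ← key, Finset.mul_sum]
  refine Finset.sum_congr rfl fun S hS => ?_
  rw [Finset.mem_powersetCard] at hS
  have hsub : S ⊆ Finset.Icc 1 (b + m + 1) :=
    hS.1.trans (Finset.Icc_subset_Icc le_rfl (by omega))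
  have hnot : b + m + 1 ∉ Finset.Icc 1 (b + m) \ S := by simp
  have hins : Finset.Icc 1 (b + m + 1) \ S = insert (b + m + 1) (Finset.Icc 1 (b + m) \ S) := by
    have h0 : b + m + 1 ∉ S := fun h => by simpa using hS.1 h
    ext i
    simp only [Finset.mem_sdiff, Finset.mem_insert, Finset.mem_Icc]
    constructor
    · rintro ⟨h1, h2⟩
      by_cases h : i = b + m + 1
      · exact Or.inl h
      · exact Or.inr ⟨by omega, h2⟩
    · rintro (h | ⟨h1, h2⟩)
      · subst h
        exact ⟨by omega, h0⟩
      · exact ⟨by omega, h2⟩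
  have hS' : ∏ i ∈ S, (1 + ((n i : ℚ) - 1)) = ∏ i ∈ S, (n i : ℚ) :=
    Finset.prod_congr rfl fun i _ => by ring
  have hD : (∏ i ∈ Finset.Icc 1 (b + m + 1) \ S, (n i : ℚ)) ≠ 0 :=
    Finset.prod_ne_zero_iff.mpr fun i hi => hne i (Finset.sdiff_subset hi)
  have hT : (∏ i ∈ Finset.Icc 1 (b + m + 1) \ S, ((n i : ℚ) - 1))
      = ((n (b + m + 1) : ℚ) - 1) * ∏ i ∈ Finset.Icc 1 (b + m) \ S, ((n i : ℚ) - 1) := by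
    rw [hins, Finset.prod_insert hnot]
  have hsplit := Finset.prod_sdiff (f := fun i => (n i : ℚ)) hsub
  rw [hS', Finset.prod_div_distrib, hT, div_mul_eq_mul_div, div_eq_div_iff hD hP, ← hsplit]
  ring

end
end
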